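/- arXiv:2207.10161 — 8 statements merged into one kernel-verified Lean document; each statement's English description precedes it below -/
import Mathlib

section
/- Let 0 < α ≤ 2 and let ξ = (ξ₁,ξ₂) ∈ ℝ² satisfy s(ξ) > 0. Then the determinant of the Hessian matrix of w_α at ξ factors as det D²w_α(ξ) = (α²·(cos ξ₁ + cos ξ₂ − 2)/(128·s(ξ)^{4−α})) · (α·cos ξ₁·cos ξ₂·(cos ξ₁ + cos ξ₂) − 4·cos ξ₁·cos ξ₂ + (2−α)(cos ξ₁ + cos ξ₂)); that is, det D²w_α(ξ) = h̃(ξ,α)·h(cos ξ₁, cos ξ₂, α) where h̃(ξ,α) = α²(cos ξ₁ + cos ξ₂ − 2)/(128·s(ξ)^{4−α}). -/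
open Real

theorem aux_hasDerivAt (c q x : ℝ) (h : 0 < (c - Real.cos x) / 2) :
    HasDerivAt (fun x => ((c - Real.cos x) / 2) ^ q)
      (q * ((c - Real.cos x) / 2) ^ (q - 1) * (Real.sin x / 2)) x := by
  have h1 : HasDerivAt (fun x => (c - Real.cos x) / 2) (Real.sin x / 2) x := by
    have := ((Real.hasDerivAt_cos x).const_sub c).div_const 2
    simpa using this
  have h2 := h1.rpow_const (p := q) (Or.inl h.ne')
  convert h2 using 1
  ring

theorem aux_eventually (c x : ℝ) (h : 0 < (c - Real.cos x) / 2) :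
    ∀ᶠ x in nhds x, 0 < (c - Real.cos x) / 2 := by
  have hc : Continuous (fun x => (c - Real.cos x) / 2) := by fun_prop
  exact hc.continuousAt.eventually (lt_mem_nhds h)

theorem aux_second (c q x : ℝ) (h : 0 < (c - Real.cos x) / 2) :
    deriv (fun x => deriv (fun x' => ((c - Real.cos x') / 2) ^ q) x) x =
      q * ((q - 1) * ((c - Real.cos x) / 2) ^ (q - 1 - 1) * (Real.sin x / 2) * (Real.sin x / 2)
        + ((c - Real.cos x) / 2) ^ (q - 1) * (Real.cos x / 2)) := by
  have he : (fun x => deriv (fun x' => ((c - Real.cos x') / 2) ^ q) x) =ᶠ[nhds x]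
      fun x => q * (((c - Real.cos x) / 2) ^ (q - 1) * (Real.sin x / 2)) := by
    filter_upwards [aux_eventually c x h] with y hy
    rw [(aux_hasDerivAt c q y hy).deriv, mul_assoc]
  rw [he.deriv_eq]
  exact (((aux_hasDerivAt c (q - 1) x h).mul
    ((Real.hasDerivAt_sin x).div_const 2)).const_mul q).deriv

theorem aux_mixed (q x y : ℝ) (h : 0 < (2 - Real.cos y - Real.cos x) / 2) :
    deriv (fun x => deriv (fun y => ((2 - Real.cos x - Real.cos y) / 2) ^ q) y) x =
      q * ((q - 1) * ((2 - Real.cos y - Real.cos x) / 2) ^ (q - 1 - 1) * (Real.sin x / 2))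
        * (Real.sin y / 2) := by
  have he : (fun x => deriv (fun y => ((2 - Real.cos x - Real.cos y) / 2) ^ q) y) =ᶠ[nhds x]
      fun x => q * ((2 - Real.cos y - Real.cos x) / 2) ^ (q - 1) * (Real.sin y / 2) := by
    filter_upwards [aux_eventually (2 - Real.cos y) x h] with z hz
    rw [(aux_hasDerivAt (2 - Real.cos z) q y (by linarith)).deriv, sub_right_comm]
  rw [he.deriv_eq]
  exact (((aux_hasDerivAt (2 - Real.cos y) (q - 1) x h).const_mul q).mul_const _).deriv

/-- For `0 < α ≤ 2` and `ξ = (ξ₁,ξ₂)` with `s ξ > 0`, the determinant of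
the Hessian matrix of `w_α = s^(α/2)` at `ξ` factors as
`h̃(ξ,α) · h(cos ξ₁, cos ξ₂, α)` where `h̃(ξ,α) = α²(cos ξ₁ + cos ξ₂ − 2)/(128·s(ξ)^(4−α))`
and `h(a,b,α) = α·a·b·(a+b) − 4ab + (2−α)(a+b)`. -/
theorem stmt3 (α : ℝ) (hα1 : 0 < α) (hα2 : α ≤ 2)
    (s : ℝ → ℝ → ℝ) (hs : ∀ x y, s x y = Real.sin (x / 2) ^ 2 + Real.sin (y / 2) ^ 2)
    (w : ℝ → ℝ → ℝ) (hw : ∀ x y, w x y = s x y ^ (α / 2))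
    (ξ₁ ξ₂ : ℝ) (hξ : 0 < s ξ₁ ξ₂) :
    deriv (fun x => deriv (fun x' => w x' ξ₂) x) ξ₁ *
        deriv (fun y => deriv (fun y' => w ξ₁ y') y) ξ₂ -
      deriv (fun x => deriv (fun y => w x y) ξ₂) ξ₁ *
        deriv (fun y => deriv (fun x => w x y) ξ₁) ξ₂
      = α ^ 2 * (Real.cos ξ₁ + Real.cos ξ₂ - 2) / (128 * s ξ₁ ξ₂ ^ (4 - α)) *
          (α * Real.cos ξ₁ * Real.cos ξ₂ * (Real.cos ξ₁ + Real.cos ξ₂)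
            - 4 * (Real.cos ξ₁ * Real.cos ξ₂) + (2 - α) * (Real.cos ξ₁ + Real.cos ξ₂)) := by
  have hs' : ∀ x y, s x y = (2 - Real.cos y - Real.cos x) / 2 := by
    intro x y
    have hx := Real.cos_sq (x / 2)
    have hy := Real.cos_sq (y / 2)
    rw [mul_div_cancel₀ x two_ne_zero] at hx
    rw [mul_div_cancel₀ y two_ne_zero] at hy
    rw [hs, Real.sin_sq, Real.sin_sq, hx, hy]
    ring
  have hA : ∀ x y, w x y = ((2 - Real.cos y - Real.cos x) / 2) ^ (α / 2) := by
    intro x y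
    rw [hw, hs']
  have hB : ∀ x y, w x y = ((2 - Real.cos x - Real.cos y) / 2) ^ (α / 2) := by
    intro x y
    rw [hA, sub_right_comm]
  have h1 : 0 < (2 - Real.cos ξ₂ - Real.cos ξ₁) / 2 := by rw [← hs']; exact hξ
  have h2 : 0 < (2 - Real.cos ξ₁ - Real.cos ξ₂) / 2 := by linarith
  have e1 := (show deriv (fun x => deriv (fun x' => w x' ξ₂) x) ξ₁= deriv _ _ from by simp only [hA]).trans
    (aux_second (2 - Real.cos ξ₂) (α / 2) ξ₁ h1)
  have e2 := (show deriv (fun y => deriv (fun y' => w ξ₁ y') y) ξ₂= deriv _ _ from by simp only [hB]).trans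
    (aux_second (2 - Real.cos ξ₁) (α / 2) ξ₂ h2)
  have e3 := (show deriv (fun x => deriv (fun y => w x y) ξ₂) ξ₁= deriv _ _ from by simp only [hB]).trans
    (aux_mixed (α / 2) ξ₁ ξ₂ h1)
  have e4 := (show deriv (fun y => deriv (fun x => w x y) ξ₁) ξ₂= deriv _ _ from by simp only [hA]).trans
    (aux_mixed (α / 2) ξ₂ ξ₁ h2)
  rw [e1, e2, e3, e4, sub_right_comm 2 (Real.cos ξ₁) (Real.cos ξ₂), ← hs' ξ₁ ξ₂]
  have hS := hs' ξ₁ ξ₂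
  generalize s ξ₁ ξ₂ = S at hξ hS ⊢
  have r1 : S ^ (α / 2 - 1) = S ^ (α / 2 - 1 - 1) * S := by
    rw [← Real.rpow_add_one hξ.ne']
    ring_nf
  have r2 : S ^ (4 - α) = (S ^ (α / 2 - 1 - 1) * S ^ (α / 2 - 1 - 1))⁻¹ := by
    rw [← Real.rpow_add hξ, ← Real.rpow_neg hξ.le]
    ring_nf
  have hT : 0 < S ^ (α / 2 - 1 - 1) := Real.rpow_pos_of_pos hξ _
  rw [r1, r2]
  generalize S ^ (α / 2 - 1 - 1) = T at hT ⊢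
  have s1 := Real.sin_sq ξ₁
  have s2 := Real.sin_sq ξ₂
  generalize Real.sin ξ₁ = p at *
  generalize Real.sin ξ₂ = q at *
  generalize Real.cos ξ₁ = a at *
  generalize Real.cos ξ₂ = b at *
  have hb : b = 2 - a - 2 * S := by linarith
  have key : α ^ 2 * (a + b - 2) / (128 * (T * T)⁻¹) = α ^ 2 * (a + b - 2) * T ^ 2 / 128 := by
    field_simp
  rw [key]
  have l : ∀ u v : ℝ, u = α / 2 * ((α / 2 - 1) * T * (p / 2) * (p / 2) + T * S * (a / 2)) →
      v = α / 2 * ((α / 2 - 1) * T * (q / 2) * (q / 2) + T * S * (b / 2)) →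
      u * v - (α / 2 * ((α / 2 - 1) * T * (p / 2)) * (q / 2)) *
        (α / 2 * ((α / 2 - 1) * T * (q / 2)) * (p / 2)) =
      (α / 2) ^ 2 * T ^ 2 * S * (S * a * b / 4 + (α / 2 - 1) * (p ^ 2 * b + q ^ 2 * a) / 8) := by
    rintro u v rfl rfl
    ring
  rw [l _ _ rfl rfl, s1, s2, hb]
  ring
end

section
/- Let 1 < α < 2. For every ξ ∈ [−π,π]² with ξ ≠ (0,0), the Hessian matrix D²w_α(ξ) (which is well defined since s(ξ) > 0 at such points) is not the zero matrix. -/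
open Real

lemma aux_base (c x : ℝ) : HasDerivAt (fun x => sin (x / 2) ^ 2 + c) (sin (x / 2) * cos (x / 2)) x := by
  have h := ((((hasDerivAt_id x).div_const 2).sin).pow 2).add_const c
  refine h.congr_deriv ?_
  simp
  ring

lemma aux_pow (c p x : ℝ) (h0 : 0 < sin (x / 2) ^ 2 + c) :
    HasDerivAt (fun x => (sin (x / 2) ^ 2 + c) ^ p)
      (sin (x / 2) * cos (x / 2) * p * (sin (x / 2) ^ 2 + c) ^ (p - 1)) x :=
  (aux_base c x).rpow_const (Or.inl h0.ne')

lemma aux_ev (c x : ℝ) (h0 : 0 < sin (x / 2) ^ 2 + c) :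
    ∀ᶠ t in nhds x, 0 < sin (t / 2) ^ 2 + c :=
  (aux_base c x).continuousAt.eventually (lt_mem_nhds h0)

lemma aux_second_s4 (c p x : ℝ) (hp : 0 < p) (h0 : 0 < sin (x / 2) ^ 2 + c)
    (hA : sin (x / 2) * cos (x / 2) = 0) :
    deriv (fun x => deriv (fun x => (sin (x / 2) ^ 2 + c) ^ p) x) x ≠ 0 := by
  have he : (fun x => deriv (fun x => (sin (x / 2) ^ 2 + c) ^ p) x) =ᶠ[nhds x]
      fun x => sin (x / 2) * cos (x / 2) * p * (sin (x / 2) ^ 2 + c) ^ (p - 1) := by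
    filter_upwards [aux_ev c x h0] with t ht
    exact (aux_pow c p t ht).deriv
  have hs : HasDerivAt (fun x : ℝ => sin (x / 2)) (cos (x / 2) * (1 / 2)) x :=
    ((hasDerivAt_id x).div_const 2).sin
  have hc : HasDerivAt (fun x : ℝ => cos (x / 2)) (-sin (x / 2) * (1 / 2)) x :=
    ((hasDerivAt_id x).div_const 2).cos
  have hd := ((hs.mul hc).mul_const p).mul (aux_pow c (p - 1) x h0)
  rw [he.deriv_eq]
  have hd' : deriv (fun x => sin (x / 2) * cos (x / 2) * p * (sin (x / 2) ^ 2 + c) ^ (p - 1)) x = _ :=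
    hd.deriv
  rw [hd']
  have hq := (rpow_pos_of_pos h0 (p - 1)).ne'
  have h1 := sin_sq_add_cos_sq (x / 2)
  simp only [Pi.mul_apply, hA, zero_mul, add_zero]
  refine mul_ne_zero (mul_ne_zero ?_ hp.ne') hq
  rcases mul_eq_zero.1 hA with h | h <;> rw [h] at h1 ⊢ <;> intro h2 <;> nlinarith

lemma aux_mixed_s4 (p x y : ℝ) (hp : 0 < p) (hp1 : p < 1)
    (h0 : 0 < sin (x / 2) ^ 2 + sin (y / 2) ^ 2)
    (h : deriv (fun x => deriv (fun y => (sin (x / 2) ^ 2 + sin (y / 2) ^ 2) ^ p) y) x = 0) :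
    sin (x / 2) * cos (x / 2) = 0 ∨ sin (y / 2) * cos (y / 2) = 0 := by
  have he : (fun x => deriv (fun y => (sin (x / 2) ^ 2 + sin (y / 2) ^ 2) ^ p) y) =ᶠ[nhds x]
      fun x => sin (y / 2) * cos (y / 2) * p * (sin (x / 2) ^ 2 + sin (y / 2) ^ 2) ^ (p - 1) := by
    filter_upwards [aux_ev _ x h0] with t ht
    have := (aux_pow (sin (t / 2) ^ 2) p y (by rwa [add_comm])).deriv
    simpa only [add_comm] using this
  rw [he.deriv_eq, ((aux_pow _ (p - 1) x h0).const_mul _).deriv] at h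
  have hq := (rpow_pos_of_pos h0 (p - 1 - 1)).ne'
  have hp2 : p - 1 ≠ 0 := by linarith
  rcases mul_eq_zero.1 h with h | h
  · exact Or.inr ((mul_eq_zero.1 h).resolve_right hp.ne')
  · exact Or.inl ((mul_eq_zero.1 ((mul_eq_zero.1 h).resolve_right hq)).resolve_right hp2)

lemma aux_zero (x : ℝ) (h : x ∈ Set.Icc (-π) π) (hs : sin (x / 2) = 0) : x = 0 := by
  have hpi := pi_pos
  have := (sin_eq_zero_iff_of_lt_of_lt (by linarith [h.1]) (by linarith [h.2])).1 hs
  linarith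



/-- For `1 < α < 2` and every `ξ ∈ [−π,π]²` with `ξ ≠ (0,0)`, the Hessian
matrix of `w_α = s^(α/2)` at `ξ` is not the zero matrix, i.e. not all four second-order
partial derivatives vanish. -/
theorem stmt4 (α : ℝ) (hα1 : 1 < α) (hα2 : α < 2)
    (s : ℝ → ℝ → ℝ) (hs : ∀ x y, s x y = Real.sin (x / 2) ^ 2 + Real.sin (y / 2) ^ 2)
    (w : ℝ → ℝ → ℝ) (hw : ∀ x y, w x y = s x y ^ (α / 2))
    (ξ₁ ξ₂ : ℝ) (h1 : ξ₁ ∈ Set.Icc (-π) π) (h2 : ξ₂ ∈ Set.Icc (-π) π)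
    (hne : (ξ₁, ξ₂) ≠ ((0 : ℝ), (0 : ℝ))) :
    ¬ (deriv (fun x => deriv (fun x' => w x' ξ₂) x) ξ₁ = 0 ∧
        deriv (fun x => deriv (fun y => w x y) ξ₂) ξ₁ = 0 ∧
        deriv (fun y => deriv (fun x => w x y) ξ₁) ξ₂ = 0 ∧
        deriv (fun y => deriv (fun y' => w ξ₁ y') y) ξ₂ = 0) := by
  rintro ⟨hxx, hxy, -, hyy⟩
  simp only [hw, hs] at hxx hxy hyy
  have h0 : 0 < sin (ξ₁ / 2) ^ 2 + sin (ξ₂ / 2) ^ 2 := by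
    by_contra hcon
    have ha : sin (ξ₁ / 2) = 0 := by
      nlinarith [sq_nonneg (sin (ξ₁ / 2)), sq_nonneg (sin (ξ₂ / 2))]
    have hb : sin (ξ₂ / 2) = 0 := by
      nlinarith [sq_nonneg (sin (ξ₁ / 2)), sq_nonneg (sin (ξ₂ / 2))]
    exact hne (by rw [aux_zero _ h1 ha, aux_zero _ h2 hb])
  rcases aux_mixed_s4 (α / 2) ξ₁ ξ₂ (by linarith) (by linarith) h0 hxy with h | h
  · exact aux_second_s4 _ _ _ (by linarith) h0 h hxx
  · refine aux_second_s4 (sin (ξ₁ / 2) ^ 2) (α / 2) ξ₂ (by linarith) (by rwa [add_comm]) h ?_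
    simpa only [add_comm] using hyy
end

section
/- Let α₁, α₂ ∈ [1,2] with α₁ ≠ α₂. If (a,b) ∈ [−1,1) × [−1,1) satisfies both h(a,b,α₁) = 0 and h(a,b,α₂) = 0, then (a,b) = (0,0). That is, the zero sets E_{α₁} and E_{α₂} in [−1,1)² intersect exactly in the single point (0,0). -/
/-- For `α₁, α₂ ∈ [1,2]` with `α₁ ≠ α₂`, if `(a,b) ∈ [−1,1)²` is a common
zero of `h(·,·,α₁)` and `h(·,·,α₂)`, where `h(a,b,α) = α·a·b·(a+b) − 4ab + (2−α)(a+b)`,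
then `(a,b) = (0,0)`. -/
theorem stmt6 (α₁ α₂ : ℝ) (hα₁ : α₁ ∈ Set.Icc (1 : ℝ) 2) (hα₂ : α₂ ∈ Set.Icc (1 : ℝ) 2)
    (hne : α₁ ≠ α₂)
    (h : ℝ → ℝ → ℝ → ℝ)
    (hh : ∀ a b α, h a b α = α * a * b * (a + b) - 4 * (a * b) + (2 - α) * (a + b))
    (a b : ℝ) (ha : a ∈ Set.Ico (-1 : ℝ) 1) (hb : b ∈ Set.Ico (-1 : ℝ) 1)
    (h1 : h a b α₁ = 0) (h2 : h a b α₂ = 0) :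
    a = 0 ∧ b = 0 := by
  rw [hh] at h1 h2
  have hd : (α₁ - α₂) * ((a + b) * (a * b - 1)) = 0 := by linear_combination h1 - h2
  have hp : (a + b) * (a * b - 1) = 0 :=
    (mul_eq_zero.mp hd).resolve_left (sub_ne_zero.mpr hne)
  have hs : a + b = 2 * (a * b) := by linear_combination (h1 - α₁ * hp) / 2
  rcases mul_eq_zero.mp hp with h0 | h0
  · have hb' : b = -a := by linarith
    have ha2 : a ^ 2 = 0 := by
      rw [hb'] at hs
      linear_combination hs / 2
    have ha0 : a = 0 := pow_eq_zero_iff (two_ne_zero) |>.mp ha2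
    exact ⟨ha0, by linarith⟩
  · exfalso
    linarith [ha.2, hb.2]
end

section
/- Let 1 < α < 2 and let (a,b) ∈ [−1,1) × [−1,1). If h(a,b,α) = 0 and −(2−α)(1−a²)·∂_a h(a,b,α) + (α·a² + 2(b−2)·a + 2 − α)·∂_b h(a,b,α) = 0, where ∂_a h(a,b,α) = α·b·(2a+b) − 4b + 2 − α and ∂_b h(a,b,α) = α·a·(a+2b) − 4a + 2 − α, then (a,b) = (0,0). (This is the key algebraic step showing that along the degeneracy curve E_α the third directional derivative of w_α in the degenerate direction vanishes only at the points corresponding to (±π/2, ±π/2).) -/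
/-- For `1 < α < 2` and `(a,b) ∈ [−1,1)²`, if `h(a,b,α) = 0` and
`−(2−α)(1−a²)·∂_a h + (α·a² + 2(b−2)a + 2 − α)·∂_b h = 0` (with the explicit formulas
for the partial derivatives of `h`), then `(a,b) = (0,0)`. -/
theorem stmt7 (α : ℝ) (hα1 : 1 < α) (hα2 : α < 2)
    (h : ℝ → ℝ → ℝ)
    (hh : ∀ a b, h a b = α * a * b * (a + b) - 4 * (a * b) + (2 - α) * (a + b))
    (a b : ℝ) (ha : a ∈ Set.Ico (-1 : ℝ) 1) (hb : b ∈ Set.Ico (-1 : ℝ) 1)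
    (hzero : h a b = 0)
    (hdeg : -(2 - α) * (1 - a ^ 2) * (α * b * (2 * a + b) - 4 * b + 2 - α)
        + (α * a ^ 2 + 2 * (b - 2) * a + 2 - α) * (α * a * (a + 2 * b) - 4 * a + 2 - α)
        = 0) :
    a = 0 ∧ b = 0 := by
  obtain ⟨ha1, ha2⟩ := ha
  obtain ⟨hb1, hb2⟩ := hb
  have hz := hzero
  rw [hh] at hz
  clear hzero
  have h2 : 0 < 2 - α := by linarith
  by_cases ha0 : a = 0
  · subst ha0
    refine ⟨rfl, ?_⟩
    have : (2 - α) * b = 0 := by linarith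
    exact (mul_eq_zero.mp this).resolve_left h2.ne'
  by_cases hb0 : b = 0
  · subst hb0
    refine ⟨?_, rfl⟩
    have : (2 - α) * a = 0 := by linarith
    exact (mul_eq_zero.mp this).resolve_left h2.ne'
  exfalso
  have hs2 : 0 < 2 - (a + b) := by linarith
  have hp : 0 ≤ 1 - a * b := by nlinarith
  have e0 : (2 - α) * ((a + b) * (1 - a * b)) = 2 * (a * b) * (2 - (a + b)) := by
    linear_combination hz
  have e1 : (a + b) * (1 - a * b) * (α * b * (2 * a + b) - 4 * b + 2 - α)
      = 2 * b * ((a + b) ^ 2 - 2 * b * (1 + a ^ 2)) := by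
    linear_combination (1 - b * (2 * a + b)) * e0
  have e2 : (a + b) * (1 - a * b) * (α * a * (a + 2 * b) - 4 * a + 2 - α)
      = 2 * a * ((a + b) ^ 2 - 2 * a * (1 + b ^ 2)) := by
    linear_combination (1 - a * (a + 2 * b)) * e0
  have e3 : (a + b) * (1 - a * b) * (α * a ^ 2 + 2 * (b - 2) * a + 2 - α)
      = -(2 * a ^ 2 * (2 - (a + b)) * (1 - b ^ 2)) := by
    linear_combination (1 - a ^ 2) * e0
  have key : (4 * a * (2 - (a + b))) *
      (b ^ 2 * (1 - a ^ 2) * ((a + b) ^ 2 - 2 * b * (1 + a ^ 2))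
        + a ^ 2 * (1 - b ^ 2) * ((a + b) ^ 2 - 2 * a * (1 + b ^ 2))) = 0 := by
    have m1 := congrArg₂ (· * ·) e0 e1
    have m2 := congrArg₂ (· * ·) e3 e2
    linear_combination -(1 - a ^ 2) * m1 + m2 - ((a + b) * (1 - a * b)) ^ 2 * hdeg
  have P := (mul_eq_zero.mp key).resolve_left
    (mul_ne_zero (mul_ne_zero (by norm_num) ha0) hs2.ne')
  clear key e1 e2 e3 hdeg hz
  have hpne : a * b ≠ 0 := mul_ne_zero ha0 hb0
  rcases lt_or_gt_of_ne hpne with hneg | hpos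
  · -- opposite signs, so the sum is negative
    have hs : a + b < 0 := by
      by_contra hc
      push Not at hc
      have : 0 ≤ (2 - α) * ((a + b) * (1 - a * b)) := by positivity
      nlinarith
    have q1 : 0 ≤ 1 - a ^ 2 := by nlinarith
    have q2 : 0 ≤ 1 - b ^ 2 := by nlinarith
    have t1 : 0 ≤ (a + b) ^ 2 * (b ^ 2 * (1 - a ^ 2) + a ^ 2 * (1 - b ^ 2)) := by positivity
    have t2 : b ^ 3 * (1 - a ^ 4) + a ^ 3 * (1 - b ^ 4)
        = (a + b) * (a ^ 2 - a * b + b ^ 2 - (a * b) ^ 3) := by ring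
    have t3 : 0 < a ^ 2 - a * b + b ^ 2 - (a * b) ^ 3 := by
      have : (a * b) ^ 3 < 0 := Odd.pow_neg (by decide) hneg
      nlinarith [sq_nonneg a, sq_nonneg b]
    have t4 := mul_neg_of_neg_of_pos hs t3
    nlinarith
  · have hs : 0 < a + b := by
      by_contra hc
      push Not at hc
      have : (2 - α) * ((a + b) * (1 - a * b)) ≤ 0 :=
        mul_nonpos_of_nonneg_of_nonpos h2.le (mul_nonpos_of_nonpos_of_nonneg hc hp)
      nlinarith [mul_pos hpos hs2]
    have hapos : 0 < a := by
      by_contra hc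
      push Not at hc
      nlinarith
    have hbpos : 0 < b := (mul_pos_iff_of_pos_left hapos).mp hpos
    have q1 : 0 < 1 - a ^ 2 := by nlinarith
    have q2 : 0 < 1 - b ^ 2 := by nlinarith
    have r1 : 0 < 1 - a := by linarith
    have r2 : 0 < 1 - b := by linarith
    have t1 : 0 < (b ^ 2 * (1 - a ^ 2) + a ^ 2 * (1 - b ^ 2))
        * ((a + b) * ((1 - a) * (1 - b))) := by positivity
    have t3 : 0 ≤ (a + b) * ((a - b) ^ 2 * (1 - a * b)) := by positivity
    nlinarith
end

section
/- For all real numbers A > 0 and B > 0, the improper integral ∫₀^∞ (A·x² + B·x)^{−3/4} dx converges and equals (Γ(1/4)·Γ(1/2)/Γ(3/4)) · A^{−1/4} · B^{−1/2}. Moreover ∫_{−∞}^{−B/A} (A·x² + B·x)^{−3/4} dx converges and has the same value, so the sum of the two integrals equals 2√π·(Γ(1/4)/Γ(3/4))·A^{−1/4}·B^{−1/2}. -/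
open Real MeasureTheory

lemma beta_aux : IntegrableOn (fun u : ℝ => u ^ (-(3/4) : ℝ) * (1 - u) ^ (-(1/2) : ℝ)) (Set.Ioo 0 1) ∧
    ∫ u in Set.Ioo (0:ℝ) 1, u ^ (-(3/4) : ℝ) * (1 - u) ^ (-(1/2) : ℝ)
      = Real.Gamma (1 / 4) * Real.Gamma (1 / 2) / Real.Gamma (3 / 4) := by
  have h1 := Complex.betaIntegral_convergent (u := (1/4 : ℝ)) (v := (1/2 : ℝ)) (by simp) (by simp)
  have h2 := Complex.betaIntegral_eq_Gamma_mul_div (1/4 : ℝ) (1/2 : ℝ) (by simp) (by simp)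
  have key : ∀ u ∈ Set.Ioo (0:ℝ) 1, (u : ℂ) ^ ((1/4 : ℝ) - 1 : ℂ) * (1 - (u:ℂ)) ^ ((1/2 : ℝ) - 1 : ℂ)
      = ((u ^ (-(3/4) : ℝ) * (1 - u) ^ (-(1/2) : ℝ) : ℝ) : ℂ) := by
    intro u hu
    have e1 : ((1/4 : ℝ) - 1 : ℂ) = ((-(3/4) : ℝ) : ℂ) := by push_cast; norm_num
    have e2 : ((1/2 : ℝ) - 1 : ℂ) = ((-(1/2) : ℝ) : ℂ) := by push_cast; norm_num
    have e3 : (1 - (u:ℂ)) = ((1 - u : ℝ) : ℂ) := by push_cast; rfl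
    rw [e1, e2, e3, ← Complex.ofReal_cpow hu.1.le, ← Complex.ofReal_cpow (by linarith [hu.2]),
      ← Complex.ofReal_mul]
  rw [intervalIntegrable_iff_integrableOn_Ioo_of_le zero_le_one,
    integrableOn_congr_fun key measurableSet_Ioo] at h1
  rw [Complex.betaIntegral, intervalIntegral.integral_of_le zero_le_one,
    integral_Ioc_eq_integral_Ioo, setIntegral_congr_fun measurableSet_Ioo key,
    integral_complex_ofReal, ← Complex.ofReal_add, Complex.Gamma_ofReal, Complex.Gamma_ofReal,
    Complex.Gamma_ofReal] at h2
  refine ⟨?_, ?_⟩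
  · have := h1.re
    simpa [IntegrableOn] using this
  · rw [← Complex.ofReal_mul, ← Complex.ofReal_div] at h2
    rw [Complex.ofReal_injective h2]
    norm_num

lemma image_aux (c : ℝ) (hc : 0 < c) : (fun u : ℝ => c * (u / (1 - u))) '' Set.Ioo 0 1 = Set.Ioi 0 := by
  ext x
  constructor
  · rintro ⟨u, ⟨h0, h1⟩, rfl⟩
    have : 0 < 1 - u := by linarith
    exact Set.mem_Ioi.2 (by positivity)
  · intro hx
    have hx : 0 < x := hx
    refine ⟨x / (c + x), ⟨by positivity, by rw [div_lt_one (by positivity)]; linarith⟩, ?_⟩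
    have : 1 - x / (c + x) = c / (c + x) := by field_simp; ring
    simp only [this]
    field_simp

lemma deriv_aux (c u : ℝ) (hu : u ∈ Set.Ioo (0:ℝ) 1) :
    HasDerivWithinAt (fun u : ℝ => c * (u / (1 - u))) (c / (1 - u) ^ 2) (Set.Ioo 0 1) u := by
  have h : 1 - u ≠ 0 := by linarith [hu.2]
  have := ((hasDerivAt_id u).div ((hasDerivAt_id u).const_sub 1) h).const_mul c
  have e : c * ((1 * (1 - id u) - id u * -1) / (1 - id u) ^ 2) = c / (1 - u) ^ 2 := by
    simp only [id]
    ring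
  rw [← e]
  exact this.hasDerivWithinAt

lemma inj_aux (c : ℝ) (hc : 0 < c) : Set.InjOn (fun u : ℝ => c * (u / (1 - u))) (Set.Ioo 0 1) := by
  intro u hu v hv h
  have h1 : 1 - u ≠ 0 := by linarith [hu.2]
  have h2 : 1 - v ≠ 0 := by linarith [hv.2]
  have h := mul_left_cancel₀ hc.ne' h
  rw [div_eq_div_iff h1 h2] at h
  linarith

lemma integrand_aux (A B : ℝ) (hA : 0 < A) (hB : 0 < B) (u : ℝ) (hu : u ∈ Set.Ioo (0:ℝ) 1) :
    |(B / A) / (1 - u) ^ 2| • (A * ((B / A) * (u / (1 - u))) ^ 2 + B * ((B / A) * (u / (1 - u)))) ^ (-(3 / 4) : ℝ)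
     = (A ^ (-(1 / 4) : ℝ) * B ^ (-(1 / 2) : ℝ)) * (u ^ (-(3/4) : ℝ) * (1 - u) ^ (-(1/2) : ℝ)) := by
  have h0 := hu.1
  have h : 0 < 1 - u := by linarith [hu.2]
  generalize hw : 1 - u = w at *
  obtain rfl : u = 1 - w := by linarith
  have e : A * ((B / A) * ((1 - w) / w)) ^ 2 + B * ((B / A) * ((1 - w) / w))
      = B ^ (2:ℝ) * A ^ (-1:ℝ) * (1 - w) * w ^ (-2:ℝ) := by
    rw [rpow_neg_one, rpow_neg h.le, rpow_two, rpow_two]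
    field_simp
    ring
  rw [e, abs_of_pos (by positivity), smul_eq_mul, mul_rpow (by positivity) (by positivity),
    mul_rpow (by positivity) h0.le, mul_rpow (by positivity) (by positivity),
    ← rpow_mul hB.le, ← rpow_mul hA.le, ← rpow_mul h.le]
  have a1 : A ^ (-(1 / 4) : ℝ) = A ^ (-1 * -(3/4) : ℝ) * A⁻¹ := by
    rw [← rpow_neg_one A, ← rpow_add hA]; norm_num
  have a2 : B ^ (-(1 / 2) : ℝ) = B ^ (2 * -(3/4) : ℝ) * B := by
    nth_rw 3 [← rpow_one B]
    rw [← rpow_add hB]; norm_num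
  have a3 : w ^ (-(1 / 2) : ℝ) = w ^ (-2 * -(3/4) : ℝ) * (w ^ 2)⁻¹ := by
    rw [← rpow_two, ← rpow_neg h.le, ← rpow_add h]; norm_num
  rw [a1, a2, a3]
  field_simp


/-- For `A, B > 0`, the integral `∫₀^∞ (Ax² + Bx)^(−3/4) dx` converges and
equals `Γ(1/4)Γ(1/2)/Γ(3/4) · A^(−1/4) · B^(−1/2)`; the integral over `(−∞, −B/A)`
converges and has the same value, and the sum of the two equals
`2√π·(Γ(1/4)/Γ(3/4))·A^(−1/4)·B^(−1/2)`. -/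
theorem stmt9 (A B : ℝ) (hA : 0 < A) (hB : 0 < B) :
    IntegrableOn (fun x : ℝ => (A * x ^ 2 + B * x) ^ (-(3 / 4) : ℝ)) (Set.Ioi 0) ∧
    (∫ x in Set.Ioi (0 : ℝ), (A * x ^ 2 + B * x) ^ (-(3 / 4) : ℝ))
      = Real.Gamma (1 / 4) * Real.Gamma (1 / 2) / Real.Gamma (3 / 4)
          * A ^ (-(1 / 4) : ℝ) * B ^ (-(1 / 2) : ℝ) ∧
    IntegrableOn (fun x : ℝ => (A * x ^ 2 + B * x) ^ (-(3 / 4) : ℝ)) (Set.Iio (-B / A)) ∧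
    (∫ x in Set.Iio (-B / A), (A * x ^ 2 + B * x) ^ (-(3 / 4) : ℝ))
      = Real.Gamma (1 / 4) * Real.Gamma (1 / 2) / Real.Gamma (3 / 4)
          * A ^ (-(1 / 4) : ℝ) * B ^ (-(1 / 2) : ℝ) ∧
    (∫ x in Set.Ioi (0 : ℝ), (A * x ^ 2 + B * x) ^ (-(3 / 4) : ℝ))
        + (∫ x in Set.Iio (-B / A), (A * x ^ 2 + B * x) ^ (-(3 / 4) : ℝ))
      = 2 * Real.sqrt π * (Real.Gamma (1 / 4) / Real.Gamma (3 / 4))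
          * A ^ (-(1 / 4) : ℝ) * B ^ (-(1 / 2) : ℝ) := by
  have P1 : IntegrableOn (fun x : ℝ => (A * x ^ 2 + B * x) ^ (-(3 / 4) : ℝ)) (Set.Ioi 0) := by
    rw [← image_aux (B / A) (by positivity),
      integrableOn_image_iff_integrableOn_abs_deriv_smul measurableSet_Ioo
        (fun u hu => deriv_aux (B / A) u hu) (inj_aux (B / A) (by positivity)),
      integrableOn_congr_fun (fun u hu => integrand_aux A B hA hB u hu) measurableSet_Ioo]
    exact beta_aux.1.const_mul _
  have P2 : (∫ x in Set.Ioi (0 : ℝ), (A * x ^ 2 + B * x) ^ (-(3 / 4) : ℝ))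
      = Real.Gamma (1 / 4) * Real.Gamma (1 / 2) / Real.Gamma (3 / 4)
          * A ^ (-(1 / 4) : ℝ) * B ^ (-(1 / 2) : ℝ) := by
    rw [← image_aux (B / A) (by positivity),
      integral_image_eq_integral_abs_deriv_smul measurableSet_Ioo
        (fun u hu => deriv_aux (B / A) u hu) (inj_aux (B / A) (by positivity)),
      setIntegral_congr_fun measurableSet_Ioo (fun u hu => integrand_aux A B hA hB u hu),
      integral_const_mul, beta_aux.2]
    ring
  have im : (fun y : ℝ => -B / A - y) '' Set.Ioi 0 = Set.Iio (-B / A) := by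
    simp
  have dr : ∀ y ∈ Set.Ioi (0:ℝ), HasDerivWithinAt (fun y : ℝ => -B / A - y) (-1) (Set.Ioi 0) y :=
    fun y _ => ((hasDerivAt_id y).const_sub _).hasDerivWithinAt
  have ij : Set.InjOn (fun y : ℝ => -B / A - y) (Set.Ioi 0) := fun a _ b _ h => by
    simpa using h
  have cg : ∀ y : ℝ, |(-1:ℝ)| • (A * (-B / A - y) ^ 2 + B * (-B / A - y)) ^ (-(3 / 4) : ℝ)
      = (A * y ^ 2 + B * y) ^ (-(3 / 4) : ℝ) := by
    intro y
    rw [abs_neg, abs_one, one_smul]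
    congr 1
    field_simp
    ring
  have P3 : IntegrableOn (fun x : ℝ => (A * x ^ 2 + B * x) ^ (-(3 / 4) : ℝ)) (Set.Iio (-B / A)) := by
    rw [← im, integrableOn_image_iff_integrableOn_abs_deriv_smul measurableSet_Ioi dr ij]
    simp only [cg]
    exact P1
  have P4 : (∫ x in Set.Iio (-B / A), (A * x ^ 2 + B * x) ^ (-(3 / 4) : ℝ))
      = Real.Gamma (1 / 4) * Real.Gamma (1 / 2) / Real.Gamma (3 / 4)
          * A ^ (-(1 / 4) : ℝ) * B ^ (-(1 / 2) : ℝ) := by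
    rw [← im, integral_image_eq_integral_abs_deriv_smul measurableSet_Ioi dr ij]
    simp only [cg]
    exact P2
  refine ⟨P1, P2, P3, P4, ?_⟩
  rw [P2, P4, Real.Gamma_one_half_eq]
  ring
end

section
/- Let d ≥ 1 be an integer, 1 < α < 2, and let ζ : ℝ^d → ℂ be smooth and compactly supported with s(ξ) > 0 for every ξ in the support of ζ. Let m > 0. Then for every n ∈ ℕ there exists a constant C = C(n, m, ζ, α, d) > 0 such that for every v ∈ ℝ^d satisfying ‖v − ∇w_α(ξ)‖ ≥ m for all ξ in the support of ζ, and every real τ ≠ 0, one has |∫_{ℝ^d} e^{iτ(v·ξ − w_α(ξ))} ζ(ξ) dξ| ≤ C·|τ|^{−n}. -/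
open Real MeasureTheory

/-- The normalised field `D / |D|^2` with `D = v - G`. -/
noncomputable def uF {d : ℕ} (G : (Fin d → ℝ) → Fin d → ℝ) (v ξ : Fin d → ℝ) : Fin d → ℝ :=
  fun i => (v i - G ξ i) / ∑ k, (v k - G ξ k) ^ 2

/-- The oscillating factor. -/
noncomputable def eF {d : ℕ} (w : (Fin d → ℝ) → ℝ) (v : Fin d → ℝ) (τ : ℝ) (ξ : Fin d → ℝ) : ℂ :=
  Complex.exp (Complex.I * (τ : ℂ) * (((∑ i, v i * ξ i) - w ξ : ℝ) : ℂ))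

/-- The derivative of `uF` in direction `e_j`, as a function of `(ξ, u)`. -/
noncomputable def WF {d : ℕ} (G : (Fin d → ℝ) → Fin d → ℝ) (j : Fin d)
    (p : (Fin d → ℝ) × (Fin d → ℝ)) : Fin d → ℝ :=
  fun i => -(∑ k, p.2 k ^ 2) * (fderiv ℝ G p.1 (Pi.single j 1) i)
    + 2 * (∑ k, p.2 k * fderiv ℝ G p.1 (Pi.single j 1) k) * p.2 i

/-- amplitude times `u_j`. -/
noncomputable def QF {d : ℕ} (P : (Fin d → ℝ) × (Fin d → ℝ) → ℂ) (j : Fin d)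
    (p : (Fin d → ℝ) × (Fin d → ℝ)) : ℂ := ((p.2 j : ℝ) : ℂ) * P p

/-- the transposed operator on amplitudes. -/
noncomputable def TF {d : ℕ} (G : (Fin d → ℝ) → Fin d → ℝ)
    (P : (Fin d → ℝ) × (Fin d → ℝ) → ℂ) (p : (Fin d → ℝ) × (Fin d → ℝ)) : ℂ :=
  ∑ j, fderiv ℝ (QF P j) p (Pi.single j 1, WF G j p)

section Aux

variable {d : ℕ}

lemma QF_contDiff (P : (Fin d → ℝ) × (Fin d → ℝ) → ℂ) (hP : ContDiff ℝ (⊤ : ℕ∞) P) (j : Fin d) :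
    ContDiff ℝ (⊤ : ℕ∞) (QF P j) := by
  unfold QF
  refine ContDiff.mul ?_ hP
  exact Complex.ofRealCLM.contDiff.comp (by fun_prop)

lemma WF_contDiffAt (G : (Fin d → ℝ) → Fin d → ℝ) (p : (Fin d → ℝ) × (Fin d → ℝ))
    (hG : ContDiffAt ℝ (⊤ : ℕ∞) G p.1) (j : Fin d) : ContDiffAt ℝ (⊤ : ℕ∞) (WF G j) p := by
  have h1 : ContDiffAt ℝ (⊤ : ℕ∞) (fun p : (Fin d → ℝ) × (Fin d → ℝ) =>
      fderiv ℝ G p.1 (Pi.single j 1)) p := by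
    have := (hG.fderiv_right (m := (⊤ : ℕ∞)) (by exact_mod_cast le_top))
    exact ContDiffAt.clm_apply (ContDiffAt.comp p this contDiffAt_fst) contDiffAt_const
  have h2 : ∀ k, ContDiffAt ℝ (⊤ : ℕ∞) (fun p : (Fin d → ℝ) × (Fin d → ℝ) =>
      fderiv ℝ G p.1 (Pi.single j 1) k) p := fun k => contDiffAt_pi.1 h1 k
  have h3 : ∀ k, ContDiffAt ℝ (⊤ : ℕ∞) (fun p : (Fin d → ℝ) × (Fin d → ℝ) => p.2 k) p :=
    fun k => by fun_prop
  unfold WF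
  rw [contDiffAt_pi]
  intro i
  refine ContDiffAt.add (ContDiffAt.mul (ContDiffAt.neg (ContDiffAt.sum fun k _ => (h3 k).pow 2)) (h2 i)) ?_
  exact ContDiffAt.mul (contDiffAt_const.mul (ContDiffAt.sum fun k _ => (h3 k).mul (h2 k))) (h3 i)

lemma evzero {F : Type*} [Zero F] {K : Set (Fin d → ℝ)} (hK : IsCompact K)
    (f : (Fin d → ℝ) × (Fin d → ℝ) → F)
    (h0 : ∀ p, p.1 ∉ K → f p = 0) (p : (Fin d → ℝ) × (Fin d → ℝ)) (hp : p.1 ∉ K) :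
    f =ᶠ[nhds p] fun _ => 0 := by
  have : {q : (Fin d → ℝ) × (Fin d → ℝ) | q.1 ∉ K} ∈ nhds p :=
    (hK.isClosed.isOpen_compl.preimage continuous_fst).mem_nhds hp
  filter_upwards [this] with q hq using h0 q hq

lemma TF_zero {K : Set (Fin d → ℝ)} (hK : IsCompact K) (G : (Fin d → ℝ) → Fin d → ℝ)
    (P : (Fin d → ℝ) × (Fin d → ℝ) → ℂ)
    (h0 : ∀ p, p.1 ∉ K → P p = 0) (p : (Fin d → ℝ) × (Fin d → ℝ)) (hp : p.1 ∉ K) :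
    TF G P p = 0 := by
  unfold TF
  refine Finset.sum_eq_zero fun j _ => ?_
  rw [(evzero hK (QF P j) (fun q hq => by simp [QF, h0 q hq]) p hp).fderiv_eq]
  simp

lemma TF_contDiff {K : Set (Fin d → ℝ)} (hK : IsCompact K) (G : (Fin d → ℝ) → Fin d → ℝ)
    (hG : ∀ ξ ∈ K, ContDiffAt ℝ (⊤ : ℕ∞) G ξ)
    (P : (Fin d → ℝ) × (Fin d → ℝ) → ℂ) (hP : ContDiff ℝ (⊤ : ℕ∞) P)
    (h0 : ∀ p, p.1 ∉ K → P p = 0) : ContDiff ℝ (⊤ : ℕ∞) (TF G P) := by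
  rw [contDiff_iff_contDiffAt]
  intro p
  by_cases hp : p.1 ∈ K
  · unfold TF
    refine ContDiffAt.sum fun j _ => ?_
    refine ContDiffAt.clm_apply ?_ (contDiffAt_const.prodMk (WF_contDiffAt G p (hG _ hp) j))
    exact ((QF_contDiff P hP j).fderiv_right (m := (⊤ : ℕ∞)) (by exact_mod_cast le_top)).contDiffAt
  · exact contDiffAt_const.congr_of_eventuallyEq (evzero hK _ (TF_zero hK G P h0) p hp)

lemma uF_contDiffAt (G : (Fin d → ℝ) → Fin d → ℝ) (v ξ : Fin d → ℝ)
    (hG : ContDiffAt ℝ (⊤ : ℕ∞) G ξ) (hq : 0 < ∑ k, (v k - G ξ k) ^ 2) :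
    ContDiffAt ℝ (⊤ : ℕ∞) (uF G v) ξ := by
  have h2 : ∀ k, ContDiffAt ℝ (⊤ : ℕ∞) (fun ξ => v k - G ξ k) ξ :=
    fun k => contDiffAt_const.sub (contDiffAt_pi.1 hG k)
  unfold uF
  rw [contDiffAt_pi]
  exact fun i => (h2 i).div (ContDiffAt.sum fun k _ => (h2 k).pow 2) hq.ne'

lemma eF_contDiffAt (w : (Fin d → ℝ) → ℝ) (v : Fin d → ℝ) (τ : ℝ) (ξ : Fin d → ℝ)
    (hw : ContDiffAt ℝ (⊤ : ℕ∞) w ξ) : ContDiffAt ℝ (⊤ : ℕ∞) (eF w v τ) ξ := by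
  unfold eF
  refine ContDiffAt.cexp (contDiffAt_const.mul ?_)
  refine Complex.ofRealCLM.contDiff.contDiffAt.comp ξ (ContDiffAt.sub ?_ hw)
  fun_prop

lemma uF_fderiv (G : (Fin d → ℝ) → Fin d → ℝ) (v ξ : Fin d → ℝ)
    (hG : ContDiffAt ℝ (⊤ : ℕ∞) G ξ) (hq : 0 < ∑ k, (v k - G ξ k) ^ 2) (j : Fin d) :
    fderiv ℝ (uF G v) ξ (Pi.single j 1) = WF G j (ξ, uF G v ξ) := by
  have hGd : HasFDerivAt G (fderiv ℝ G ξ) ξ := (hG.differentiableAt (by simp)).hasFDerivAt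
  have hk : ∀ k, HasFDerivAt (fun ξ => v k - G ξ k)
      (-((ContinuousLinearMap.proj k).comp (fderiv ℝ G ξ))) ξ := fun k =>
    (hasFDerivAt_pi'.1 hGd k).const_sub (v k)
  have hs : HasFDerivAt (fun ξ => ∑ k, (v k - G ξ k) ^ 2) _ ξ :=
    HasFDerivAt.fun_sum fun k (_ : k ∈ Finset.univ) => (hk k).pow 2
  have hu : ∀ i, HasFDerivAt (fun ξ => (v i - G ξ i) * (∑ k, (v k - G ξ k) ^ 2)⁻¹) _ ξ :=
    fun i => (hk i).mul ((hasDerivAt_inv hq.ne').comp_hasFDerivAt ξ hs)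
  have hu' := (hasFDerivAt_pi.2 hu).fderiv
  have hue : uF G v = fun ξ i => (v i - G ξ i) * (∑ k, (v k - G ξ k) ^ 2)⁻¹ := by
    funext ξ i
    simp only [uF, div_eq_mul_inv]
  conv_lhs => rw [hue]
  rw [hu']
  ext i
  set q := ∑ k, (v k - G ξ k) ^ 2 with hqd
  have e1 : ∑ k, uF G v ξ k ^ 2 = 1 / q := by
    simp only [uF, ← hqd, div_pow, ← Finset.sum_div]
    field_simp
  have e2 : ∑ k, uF G v ξ k * fderiv ℝ G ξ (Pi.single j 1) k
      = (∑ k, (v k - G ξ k) * fderiv ℝ G ξ (Pi.single j 1) k) / q := by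
    rw [Finset.sum_div]
    refine Finset.sum_congr rfl fun k _ => ?_
    simp only [uF, ← hqd]; ring
  simp only [WF, e1, e2]
  simp [uF, ← hqd]
  simp only [mul_assoc, ← Finset.mul_sum]
  ring

lemma prod_contDiff {K : Set (Fin d → ℝ)} (hK : IsCompact K) (w : (Fin d → ℝ) → ℝ)
    (G : (Fin d → ℝ) → Fin d → ℝ)
    (hw : ∀ ξ ∈ K, ContDiffAt ℝ (⊤ : ℕ∞) w ξ)
    (hG : ∀ ξ ∈ K, ContDiffAt ℝ (⊤ : ℕ∞) G ξ)
    (P : (Fin d → ℝ) × (Fin d → ℝ) → ℂ) (hP : ContDiff ℝ (⊤ : ℕ∞) P)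
    (h0 : ∀ p, p.1 ∉ K → P p = 0) (v : Fin d → ℝ)
    (hv : ∀ ξ ∈ K, 0 < ∑ k, (v k - G ξ k) ^ 2) (τ : ℝ) :
    ContDiff ℝ (⊤ : ℕ∞) (fun ξ => eF w v τ ξ * P (ξ, uF G v ξ)) := by
  rw [contDiff_iff_contDiffAt]
  intro ξ
  by_cases hp : ξ ∈ K
  · refine (eF_contDiffAt w v τ ξ (hw _ hp)).mul ?_
    exact hP.contDiffAt.comp ξ (contDiffAt_id.prodMk (uF_contDiffAt G v ξ (hG _ hp) (hv _ hp)))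
  · refine (contDiffAt_const (c := (0:ℂ))).congr_of_eventuallyEq ?_
    filter_upwards [hK.isClosed.isOpen_compl.mem_nhds hp] with q hq
    rw [h0 (q, uF G v q) hq, mul_zero]

lemma prod_supp {K : Set (Fin d → ℝ)} (hK : IsCompact K) (w : (Fin d → ℝ) → ℝ)
    (G : (Fin d → ℝ) → Fin d → ℝ)
    (P : (Fin d → ℝ) × (Fin d → ℝ) → ℂ) 
    (h0 : ∀ p, p.1 ∉ K → P p = 0) (v : Fin d → ℝ) (τ : ℝ) :
    HasCompactSupport (fun ξ => eF w v τ ξ * P (ξ, uF G v ξ)) :=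
  HasCompactSupport.intro hK fun ξ hξ => by rw [h0 _ hξ, mul_zero]

lemma int_zero (F : (Fin d → ℝ) → ℂ) (hF : ContDiff ℝ (⊤ : ℕ∞) F) (hc : HasCompactSupport F)
    (e : Fin d → ℝ) : Integrable (fun ξ => fderiv ℝ F ξ e) ∧ ∫ ξ, fderiv ℝ F ξ e = 0 := by
  have hi : Integrable (fun ξ => fderiv ℝ F ξ e) := by
    refine Continuous.integrable_of_hasCompactSupport ?_ (hc.fderiv_apply ℝ e)
    exact (hF.continuous_fderiv (by simp)).clm_apply continuous_const
  refine ⟨hi, ?_⟩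
  have := integral_mul_fderiv_eq_neg_fderiv_mul_of_integrable (𝕜 := ℂ) (μ := volume)
    (f := fun _ : Fin d → ℝ => (1:ℂ)) (g := F) (v := e) (by simp) (by simpa using hi)
    (by simpa using hF.continuous.integrable_of_hasCompactSupport hc)
    (fun _ _ => differentiableAt_const _) (fun x _ => hF.differentiable (by simp) x)
  simpa using this

lemma eF_fderiv (w : (Fin d → ℝ) → ℝ) (G : (Fin d → ℝ) → Fin d → ℝ)
    (v : Fin d → ℝ) (τ : ℝ) (ξ : Fin d → ℝ)
    (hw : HasFDerivAt w (∑ i, G ξ i • (ContinuousLinearMap.proj i : (Fin d → ℝ) →L[ℝ] ℝ)) ξ)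
    (j : Fin d) :
    HasFDerivAt (eF w v τ) (fderiv ℝ (eF w v τ) ξ) ξ ∧ fderiv ℝ (eF w v τ) ξ (Pi.single j 1)
      = Complex.I * τ * ((v j - G ξ j : ℝ) : ℂ) * eF w v τ ξ := by
  have h1 : HasFDerivAt (fun ξ : Fin d → ℝ => ∑ i, v i * ξ i)
      (∑ i, v i • (ContinuousLinearMap.proj i : (Fin d → ℝ) →L[ℝ] ℝ)) ξ :=
    HasFDerivAt.fun_sum fun i _ => (ContinuousLinearMap.proj (R := ℝ) (φ := fun _ : Fin d => ℝ) i).hasFDerivAt.const_mul (v i)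
  have h2 := ((Complex.ofRealCLM.hasFDerivAt.comp ξ (h1.sub hw)).const_mul
    (Complex.I * (τ : ℂ))).cexp
  have h3 : HasFDerivAt (eF w v τ) _ ξ := h2
  refine ⟨h3.differentiableAt.hasFDerivAt, ?_⟩
  rw [h3.fderiv]
  simp [eF, Pi.single_apply]
  ring

lemma step_pt {K : Set (Fin d → ℝ)} (hK : IsCompact K) (w : (Fin d → ℝ) → ℝ)
    (G : (Fin d → ℝ) → Fin d → ℝ)
    (hw' : ∀ ξ ∈ K,
      HasFDerivAt w (∑ i, G ξ i • (ContinuousLinearMap.proj i : (Fin d → ℝ) →L[ℝ] ℝ)) ξ)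
    (hG : ∀ ξ ∈ K, ContDiffAt ℝ (⊤ : ℕ∞) G ξ)
    (P : (Fin d → ℝ) × (Fin d → ℝ) → ℂ) (hP : ContDiff ℝ (⊤ : ℕ∞) P)
    (h0 : ∀ p, p.1 ∉ K → P p = 0) (v : Fin d → ℝ)
    (hv : ∀ ξ ∈ K, 0 < ∑ k, (v k - G ξ k) ^ 2) (τ : ℝ) (ξ : Fin d → ℝ) :
    ∑ j, fderiv ℝ (fun ξ => eF w v τ ξ * QF P j (ξ, uF G v ξ)) ξ (Pi.single j 1)
      = Complex.I * τ * (eF w v τ ξ * P (ξ, uF G v ξ)) + eF w v τ ξ * TF G P (ξ, uF G v ξ) := by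
  by_cases hp : ξ ∈ K
  · have hu : HasFDerivAt (uF G v) (fderiv ℝ (uF G v) ξ) ξ :=
      ((uF_contDiffAt G v ξ (hG _ hp) (hv _ hp)).differentiableAt (by simp)).hasFDerivAt
    have key : ∀ j, fderiv ℝ (fun ξ => eF w v τ ξ * QF P j (ξ, uF G v ξ)) ξ (Pi.single j 1)
        = Complex.I * τ * (((v j - G ξ j) * uF G v ξ j : ℝ) : ℂ) * (eF w v τ ξ * P (ξ, uF G v ξ))
          + eF w v τ ξ * fderiv ℝ (QF P j) (ξ, uF G v ξ) (Pi.single j 1, WF G j (ξ, uF G v ξ)) := by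
      intro j
      obtain ⟨he, he'⟩ := eF_fderiv w G v τ ξ (hw' _ hp) j
      have hQ : HasFDerivAt (QF P j) (fderiv ℝ (QF P j) (ξ, uF G v ξ)) (ξ, uF G v ξ) :=
        ((QF_contDiff P hP j).differentiable (by simp) _).hasFDerivAt
      have hQc := hQ.comp ξ ((hasFDerivAt_id ξ).prodMk hu)
      have := (he.mul hQc).fderiv
      change fderiv ℝ (fun ξ => eF w v τ ξ * QF P j (ξ, uF G v ξ)) ξ = _ at this
      rw [this]
      simp only [add_apply, smul_apply, he',
        ContinuousLinearMap.comp_apply, ContinuousLinearMap.prod_apply, uF_fderiv G v ξ (hG _ hp) (hv _ hp) j,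
        smul_eq_mul, Function.comp, id, ContinuousLinearMap.id_apply]
      simp only [QF]
      push_cast
      ring
    have hsum : ∑ j, (v j - G ξ j) * uF G v ξ j = 1 := by
      simp only [uF, mul_div_assoc', ← pow_two, ← Finset.sum_div]
      exact div_self (hv _ hp).ne'
    simp only [key, Finset.sum_add_distrib, ← Finset.mul_sum, ← Finset.sum_mul, TF]
    rw [← Complex.ofReal_sum, hsum]
    simp
  · rw [h0 _ hp, TF_zero hK G P h0 _ hp]
    simp only [mul_zero, add_zero]
    refine Finset.sum_eq_zero fun j _ => ?_
    have : (fun ξ => eF w v τ ξ * QF P j (ξ, uF G v ξ)) =ᶠ[nhds ξ] fun _ => 0 := by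
      filter_upwards [hK.isClosed.isOpen_compl.mem_nhds hp] with q hq
      simp [QF, h0 (q, uF G v q) hq]
    rw [this.fderiv_eq]
    simp

lemma eF_norm (w : (Fin d → ℝ) → ℝ) (v : Fin d → ℝ) (τ : ℝ) (ξ : Fin d → ℝ) :
    ‖eF w v τ ξ‖ = 1 := by
  unfold eF
  rw [show Complex.I * (τ : ℂ) * (((∑ i, v i * ξ i) - w ξ : ℝ) : ℂ)
    = ((τ * ((∑ i, v i * ξ i) - w ξ) : ℝ) : ℂ) * Complex.I by push_cast; ring]
  exact Complex.norm_exp_ofReal_mul_I _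

lemma uF_bound (G : (Fin d → ℝ) → Fin d → ℝ) (v ξ : Fin d → ℝ) (m : ℝ) (hm : 0 < m)
    (h : m ≤ Real.sqrt (∑ k, (v k - G ξ k) ^ 2)) : ‖uF G v ξ‖ ≤ 1 / m := by
  rw [pi_norm_le_iff_of_nonneg (by positivity)]
  intro i
  have hq : 0 < ∑ k, (v k - G ξ k) ^ 2 := Real.sqrt_pos.1 (hm.trans_le h)
  have h1 : |v i - G ξ i| ≤ √(∑ k, (v k - G ξ k) ^ 2) := by
    refine Real.abs_le_sqrt ?_
    exact Finset.single_le_sum (f := fun k => (v k - G ξ k) ^ 2) (fun k _ => sq_nonneg _) (Finset.mem_univ i)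
  simp only [uF, norm_div, Real.norm_eq_abs]
  rw [abs_of_pos hq, div_le_div_iff₀ hq hm]
  set r := √(∑ k, (v k - G ξ k) ^ 2) with hr
  have : ∑ k, (v k - G ξ k) ^ 2 = r * r := (Real.mul_self_sqrt hq.le).symm
  rw [this, one_mul]
  exact mul_le_mul h1 h hm.le (Real.sqrt_nonneg _)

theorem key_bound {K : Set (Fin d → ℝ)} (hK : IsCompact K) (w : (Fin d → ℝ) → ℝ)
    (G : (Fin d → ℝ) → Fin d → ℝ)
    (hw : ∀ ξ ∈ K, ContDiffAt ℝ (⊤ : ℕ∞) w ξ)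
    (hw' : ∀ ξ ∈ K,
      HasFDerivAt w (∑ i, G ξ i • (ContinuousLinearMap.proj i : (Fin d → ℝ) →L[ℝ] ℝ)) ξ)
    (hG : ∀ ξ ∈ K, ContDiffAt ℝ (⊤ : ℕ∞) G ξ) (m : ℝ) (hm : 0 < m) (n : ℕ) :
    ∀ (P : (Fin d → ℝ) × (Fin d → ℝ) → ℂ) (_ : ContDiff ℝ (⊤ : ℕ∞) P)
    (_ : ∀ p, p.1 ∉ K → P p = 0), ∃ C > 0, ∀ v : Fin d → ℝ,
      (∀ ξ ∈ K, m ≤ Real.sqrt (∑ i, (v i - G ξ i) ^ 2)) → ∀ τ : ℝ, τ ≠ 0 →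
        ‖∫ ξ, eF w v τ ξ * P (ξ, uF G v ξ)‖ ≤ C * |τ| ^ (-(n : ℝ)) := by
  induction n with
  | zero =>
    intro P hP h0
    obtain ⟨B, hB⟩ := (hK.prod (isCompact_closedBall (0 : Fin d → ℝ) (1 / m))).exists_bound_of_continuousOn
      hP.continuous.continuousOn
    refine ⟨(|B| + 1) * (volume.real K + 1), by positivity, fun v hv τ _ => ?_⟩
    have e1 : ∫ ξ, eF w v τ ξ * P (ξ, uF G v ξ) = ∫ ξ in K, eF w v τ ξ * P (ξ, uF G v ξ) := by
      rw [setIntegral_eq_integral_of_forall_compl_eq_zero]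
      intro ξ hξ
      rw [h0 _ hξ, mul_zero]
    rw [e1]
    have : ‖∫ ξ in K, eF w v τ ξ * P (ξ, uF G v ξ)‖ ≤ (|B| + 1) * volume.real K := by
      refine norm_setIntegral_le_of_norm_le_const hK.measure_lt_top fun ξ hξ => ?_
      rw [norm_mul, eF_norm, one_mul]
      have := hB (ξ, uF G v ξ) ⟨hξ, by simpa using uF_bound G v ξ m hm (hv ξ hξ)⟩
      linarith [le_abs_self B]
    have h3 : 0 ≤ |B| := abs_nonneg _
    simp
    nlinarith
  | succ n ih =>
    intro P hP h0
    obtain ⟨C, hC, H⟩ := ih (TF G P) (TF_contDiff hK G hG P hP h0) (TF_zero hK G P h0)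
    refine ⟨C, hC, fun v hv τ hτ => ?_⟩
    have hq : ∀ ξ ∈ K, 0 < ∑ k, (v k - G ξ k) ^ 2 := fun ξ hξ =>
      Real.sqrt_pos.1 (hm.trans_le (hv ξ hξ))
    have hQ : ∀ j, ∀ p, p.1 ∉ K → QF P j p = 0 := fun j p hp => by simp [QF, h0 p hp]
    have hz := fun j => int_zero _
      (prod_contDiff hK w G hw hG (QF P j) (QF_contDiff P hP j) (hQ j) v hq τ)
      (prod_supp hK w G (QF P j) (hQ j) v τ) (Pi.single j 1)
    have i1 : Integrable (fun ξ => eF w v τ ξ * P (ξ, uF G v ξ)) :=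
      (prod_contDiff hK w G hw hG P hP h0 v hq τ).continuous.integrable_of_hasCompactSupport
        (prod_supp hK w G P h0 v τ)
    have i2 : Integrable (fun ξ => eF w v τ ξ * TF G P (ξ, uF G v ξ)) :=
      (prod_contDiff hK w G hw hG _ (TF_contDiff hK G hG P hP h0) (TF_zero hK G P h0) v hq
        τ).continuous.integrable_of_hasCompactSupport (prod_supp hK w G _ (TF_zero hK G P h0) v τ)
    have e : (0 : ℂ) = Complex.I * τ * (∫ ξ, eF w v τ ξ * P (ξ, uF G v ξ))
        + ∫ ξ, eF w v τ ξ * TF G P (ξ, uF G v ξ) := by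
      rw [← integral_const_mul, ← integral_add (i1.const_mul _) i2]
      simp only [← step_pt hK w G hw' hG P hP h0 v hq τ]
      rw [integral_finsetSum _ fun j _ => (hz j).1]
      exact (Finset.sum_eq_zero fun j _ => (hz j).2).symm
    have e2 : |τ| * ‖∫ ξ, eF w v τ ξ * P (ξ, uF G v ξ)‖
        = ‖∫ ξ, eF w v τ ξ * TF G P (ξ, uF G v ξ)‖ := by
      rw [eq_neg_of_add_eq_zero_right e.symm, norm_neg, norm_mul, norm_mul]
      simp
    have hτ' : 0 < |τ| := abs_pos.2 hτ
    have e3 := H v hv τ hτ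
    rw [← e2] at e3
    have e4 : |τ| ^ (-((n + 1 : ℕ) : ℝ)) = |τ| ^ (-(n : ℝ)) / |τ| := by
      rw [← Real.rpow_sub_one hτ'.ne']; congr 1; push_cast; ring
    rw [e4, ← mul_div_assoc, le_div_iff₀ hτ', mul_comm]
    exact e3

end Aux

theorem stmt11 (d : ℕ) (hd : 1 ≤ d) (α : ℝ) (hα1 : 1 < α) (hα2 : α < 2)
    (s : (Fin d → ℝ) → ℝ) (hs : ∀ ξ, s ξ = ∑ i, Real.sin (ξ i / 2) ^ 2)
    (w : (Fin d → ℝ) → ℝ) (hw : ∀ ξ, w ξ = s ξ ^ (α / 2))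
    (G : (Fin d → ℝ) → Fin d → ℝ)
    (hG : ∀ ξ i, G ξ i = α / 4 * s ξ ^ ((α - 2) / 2) * Real.sin (ξ i))
    (ζ : (Fin d → ℝ) → ℂ) (hζ : ContDiff ℝ (⊤ : ℕ∞) ζ) (hζc : HasCompactSupport ζ)
    (hsupp : ∀ ξ ∈ tsupport ζ, 0 < s ξ)
    (m : ℝ) (hm : 0 < m) (n : ℕ) :
    ∃ C > 0, ∀ v : Fin d → ℝ,
      (∀ ξ ∈ tsupport ζ, m ≤ Real.sqrt (∑ i, (v i - G ξ i) ^ 2)) →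
      ∀ τ : ℝ, τ ≠ 0 →
        ‖∫ ξ : Fin d → ℝ,
            Complex.exp (Complex.I * (τ : ℂ) * (((∑ i, v i * ξ i) - w ξ : ℝ) : ℂ)) * ζ ξ‖
          ≤ C * |τ| ^ (-(n : ℝ)) := by
  have hsC : ContDiff ℝ (⊤ : ℕ∞) s := by
    rw [funext hs]
    refine ContDiff.sum fun i _ => ContDiff.pow (Real.contDiff_sin.comp (by fun_prop)) 2
  have hrp : ∀ (β : ℝ), ∀ ξ ∈ tsupport ζ, ContDiffAt ℝ (⊤ : ℕ∞) (fun ξ => s ξ ^ β) ξ :=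
    fun β ξ hξ => hsC.contDiffAt.rpow_const_of_ne (hsupp ξ hξ).ne'
  refine key_bound (K := tsupport ζ) hζc w G ?_ ?_ ?_ m hm n (fun p => ζ p.1)
    (hζ.comp contDiff_fst) (fun p hp => image_eq_zero_of_notMem_tsupport hp)
  · intro ξ hξ
    rw [funext hw]; exact hrp _ ξ hξ
  · intro ξ hξ
    have h1 : HasFDerivAt s
        (∑ i, (Real.sin (ξ i) / 2) • (ContinuousLinearMap.proj i : (Fin d → ℝ) →L[ℝ] ℝ)) ξ := by
      rw [funext hs]
      refine HasFDerivAt.fun_sum fun i _ => ?_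
      have h0 : HasDerivAt (fun x : ℝ => Real.sin (x / 2) ^ 2) (Real.sin (ξ i) / 2) (ξ i) := by
        have := (((hasDerivAt_id (ξ i)).div_const 2).sin).pow 2
        refine this.congr_deriv ?_
        have h2 := Real.sin_two_mul (ξ i / 2)
        rw [show 2 * (ξ i / 2) = ξ i by ring] at h2
        simp only [id]
        rw [h2]
        push_cast
        ring
      exact h0.comp_hasFDerivAt ξ
        (ContinuousLinearMap.proj (R := ℝ) (φ := fun _ : Fin d => ℝ) i).hasFDerivAt
    have h2 := h1.rpow_const (p := α / 2) (Or.inl (hsupp ξ hξ).ne')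
    rw [funext hw]
    refine h2.congr_fderiv ?_
    rw [Finset.smul_sum]
    refine Finset.sum_congr rfl fun i _ => ?_
    rw [smul_smul, hG]
    congr 1
    rw [show α / 2 - 1 = (α - 2) / 2 by ring]
    ring
  · intro ξ hξ
    rw [contDiffAt_pi]
    intro i
    simp only [hG]
    exact (contDiffAt_const.mul (hrp _ ξ hξ)).mul (Real.contDiff_sin.contDiffAt.comp ξ (by fun_prop))
end

section
/- Let d ≥ 1 be an integer, 0 < α < 2, and ξ ∈ ℝ^d. Then: (i) the function z ↦ (1 − cos(ξ·z))/‖z‖^{d+α} is Lebesgue integrable on ℝ^d (with ‖·‖ the Euclidean norm); (ii) for every h > 0 the series m_h(ξ) = h^d·∑_{z ∈ ℤ^d, z ≠ 0} (1 − cos(h·ξ·z))/‖h·z‖^{d+α} converges; and (iii) m_h(ξ) → ∫_{ℝ^d} (1 − cos(ξ·z))/‖z‖^{d+α} dz as h → 0+. -/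
open Real MeasureTheory

/-- Rounding to the nearest lattice point. -/
noncomputable def latRound {d : ℕ} (y : Fin d → ℝ) : Fin d → ℤ := fun i => ⌊y i + 1 / 2⌋

lemma latRound_measurable {d : ℕ} : Measurable (latRound (d := d)) := by
  refine measurable_pi_lambda _ fun i => ?_
  exact Int.measurable_floor.comp ((measurable_pi_apply i).add_const _)

lemma latRound_map (d : ℕ) :
    Measure.map (latRound (d := d)) volume = Measure.count := by
  refine Measure.ext_of_singleton fun z => ?_
  rw [Measure.map_apply latRound_measurable (MeasurableSet.singleton z), Measure.count_singleton]
  have : latRound (d := d) ⁻¹' {z} =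
      Set.univ.pi (fun i => Set.Ico ((z i : ℝ) - 1 / 2) ((z i : ℝ) + 1 / 2)) := by
    ext y
    simp only [Set.mem_preimage, Set.mem_singleton_iff, Set.mem_univ_pi, Set.mem_Ico, latRound,
      funext_iff, Int.floor_eq_iff]
    refine forall_congr' fun i => ?_
    constructor <;> rintro ⟨h1, h2⟩ <;> constructor <;> linarith
  rw [this, volume_pi_pi]
  have h2 : ∀ i, volume (Set.Ico ((z i : ℝ) - 1 / 2) ((z i : ℝ) + 1 / 2)) = 1 := by
    intro i
    rw [Real.volume_Ico]
    ring_nf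
    simp
  simp only [h2, Finset.prod_const_one]

lemma latRound_sum {d : ℕ} (F : (Fin d → ℤ) → ℝ)
    (hF : Integrable (fun y : Fin d → ℝ => F (latRound y))) :
    Summable F ∧ ∫ y : Fin d → ℝ, F (latRound y) = ∑' z, F z := by
  have hm : AEStronglyMeasurable F (Measure.map (latRound (d := d)) volume) :=
    (measurable_of_countable F).aestronglyMeasurable
  have h1 : Integrable F (Measure.count : Measure (Fin d → ℤ)) := by
    rw [← latRound_map, integrable_map_measure hm latRound_measurable.aemeasurable]
    exact hF
  refine ⟨(integrable_count_iff.1 h1).of_norm, ?_⟩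
  rw [← integral_map latRound_measurable.aemeasurable hm, latRound_map, integral_countable h1]
  simp [Measure.real]

/-- The dominating radial profile. -/
noncomputable def domB (s : ℝ) (r : ℝ) : ℝ := min (r ^ 2) 1 * r ^ (-s)

lemma domB_nonneg (s : ℝ) {r : ℝ} (hr : 0 ≤ r) : 0 ≤ domB s r := by
  unfold domB; positivity

lemma domB_integrable (d : ℕ) (hd : 1 ≤ d) (α : ℝ) (hα1 : 0 < α) (hα2 : α < 2) :
    Integrable (fun x : Fin d → ℝ => domB ((d : ℝ) + α) ‖x‖) := by
  have : Nonempty (Fin d) := ⟨⟨0, hd⟩⟩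
  rw [integrable_fun_norm_addHaar (volume : Measure (Fin d → ℝ))
    (f := fun r => domB ((d : ℝ) + α) r)]
  simp only [Module.finrank_fin_fun, smul_eq_mul]
  have key : ∀ y : ℝ, 0 < y → y ^ (d - 1) * domB ((d : ℝ) + α) y
      = min (y ^ 2) 1 * y ^ (-1 - α) := by
    intro y hy
    unfold domB
    rw [← Real.rpow_natCast y (d - 1), Nat.cast_sub hd, mul_left_comm, ← Real.rpow_add hy]
    congr 2
    push_cast
    ring
  have hU : Set.Ioi (0 : ℝ) = Set.Ioo 0 2 ∪ Set.Ioi 1 := by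
    ext x; simp only [Set.mem_Ioi, Set.mem_union, Set.mem_Ioo]
    constructor
    · intro h
      by_cases h2 : x < 2
      · exact Or.inl ⟨h, h2⟩
      · right; linarith
    · rintro (h | h)
      · exact h.1
      · linarith
  have hmeas : Measurable (fun y : ℝ => y ^ (d - 1) * domB ((d : ℝ) + α) y) := by
    unfold domB; fun_prop
  rw [hU]
  refine IntegrableOn.union ?_ ?_
  · have h0 : IntegrableOn (fun x : ℝ => x ^ (1 - α)) (Set.Ioo 0 2) :=
      (intervalIntegral.integrableOn_Ioo_rpow_iff (by norm_num)).2 (by linarith)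
    refine Integrable.mono' h0 hmeas.aestronglyMeasurable ?_
    filter_upwards [ae_restrict_mem measurableSet_Ioo] with y hy
    rw [key y hy.1, Real.norm_of_nonneg (by have := hy.1; positivity)]
    have : y ^ (1 - α) = y ^ 2 * y ^ (-1 - α) := by
      rw [← Real.rpow_natCast y 2, ← Real.rpow_add hy.1]
      congr 1; push_cast; ring
    rw [this]
    exact mul_le_mul_of_nonneg_right (min_le_left _ _) (Real.rpow_nonneg hy.1.le _)
  · have h0 : IntegrableOn (fun x : ℝ => x ^ (-1 - α)) (Set.Ioi 1) :=
      integrableOn_Ioi_rpow_of_lt (by linarith) one_pos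
    refine Integrable.mono' h0 hmeas.aestronglyMeasurable ?_
    filter_upwards [ae_restrict_mem measurableSet_Ioi] with y hy
    have hy0 : 0 < y := lt_trans one_pos hy
    rw [key y hy0, Real.norm_of_nonneg (by positivity)]
    exact mul_le_of_le_one_left (Real.rpow_nonneg hy0.le _) (min_le_right _ _)

lemma norm_le_sqrt_sum {d : ℕ} (z : Fin d → ℝ) : ‖z‖ ≤ Real.sqrt (∑ i, z i ^ 2) := by
  rw [pi_norm_le_iff_of_nonneg (Real.sqrt_nonneg _)]
  intro i
  rw [Real.norm_eq_abs]
  apply Real.abs_le_sqrt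
  exact Finset.single_le_sum (f := fun i => z i ^ 2) (fun j _ => sq_nonneg _) (Finset.mem_univ i)

lemma symbol_bound {d : ℕ} (s : ℝ) (hs : 0 < s) (ξ : Fin d → ℝ) (z : Fin d → ℝ) :
    (1 - Real.cos (∑ i, ξ i * z i)) / Real.sqrt (∑ i, z i ^ 2) ^ s
      ≤ (2 + (∑ i, |ξ i|) ^ 2) * domB s ‖z‖ := by
  by_cases hz : z = 0
  · subst hz
    simp [domB]
  have hn : 0 < ‖z‖ := norm_pos_iff.2 hz
  set K := ∑ i, |ξ i| with hK
  have hK0 : 0 ≤ K := Finset.sum_nonneg fun i _ => abs_nonneg _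
  have ht : |∑ i, ξ i * z i| ≤ K * ‖z‖ := by
    rw [hK, Finset.sum_mul]
    refine (Finset.abs_sum_le_sum_abs _ _).trans (Finset.sum_le_sum fun i _ => ?_)
    rw [abs_mul]
    exact mul_le_mul_of_nonneg_left (norm_le_pi_norm z i) (abs_nonneg _)
  have hc : 1 - Real.cos (∑ i, ξ i * z i) ≤ (2 + K ^ 2) * min (‖z‖ ^ 2) 1 := by
    rcases min_choice (‖z‖ ^ 2) 1 with h | h <;> rw [h]
    · have h1 := Real.one_sub_sq_div_two_le_cos (x := ∑ i, ξ i * z i)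
      have h2 : (∑ i, ξ i * z i) ^ 2 ≤ (K * ‖z‖) ^ 2 := sq_le_sq' (abs_le.1 ht).1 (abs_le.1 ht).2
      nlinarith [sq_nonneg ‖z‖, sq_nonneg (K * ‖z‖)]
    · have := Real.neg_one_le_cos (∑ i, ξ i * z i)
      nlinarith [sq_nonneg K]
  unfold domB
  rw [div_eq_mul_inv, ← mul_assoc]
  refine mul_le_mul hc ?_ (by positivity) (by positivity)
  rw [Real.rpow_neg hn.le]
  exact inv_anti₀ (Real.rpow_pos_of_pos hn _)
    (Real.rpow_le_rpow hn.le (norm_le_sqrt_sum z) hs.le)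

/-- Scaled rounding to `hℤ^d`. -/
noncomputable def latQ {d : ℕ} (h : ℝ) (x : Fin d → ℝ) : Fin d → ℝ :=
  fun i => h * (latRound (h⁻¹ • x) i : ℝ)

lemma latQ_dist {d : ℕ} {h : ℝ} (hh : 0 < h) (x : Fin d → ℝ) : ‖x - latQ h x‖ ≤ h / 2 := by
  rw [pi_norm_le_iff_of_nonneg (by positivity)]
  intro i
  simp only [Pi.sub_apply, latQ, latRound, Pi.smul_apply, smul_eq_mul]
  have h1 := Int.floor_le (h⁻¹ * x i + 1 / 2)
  have h2 := Int.lt_floor_add_one (h⁻¹ * x i + 1 / 2)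
  set n : ℝ := (⌊h⁻¹ * x i + 1 / 2⌋ : ℝ)
  have h3 : x i = h * (h⁻¹ * x i) := by field_simp
  rw [Real.norm_eq_abs, abs_le]
  set w := h⁻¹ * x i
  rw [h3]
  constructor <;> nlinarith

lemma latQ_norm {d : ℕ} {h : ℝ} (hh : 0 < h) (x : Fin d → ℝ) (hx : latQ h x ≠ 0) :
    h ≤ ‖latQ h x‖ := by
  obtain ⟨i, hi⟩ := Function.ne_iff.1 hx
  refine le_trans ?_ (norm_le_pi_norm _ i)
  simp only [latQ, Pi.zero_apply] at hi ⊢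
  have hn : latRound (h⁻¹ • x) i ≠ 0 := by
    intro h0; apply hi; rw [h0]; simp
  rw [Real.norm_eq_abs, abs_mul, abs_of_pos hh]
  have : (1 : ℝ) ≤ |(latRound (h⁻¹ • x) i : ℝ)| := by exact_mod_cast Int.one_le_abs hn
  nlinarith

lemma latQ_domB {d : ℕ} {h : ℝ} (hh : 0 < h) {s : ℝ} (hs : 0 < s) (x : Fin d → ℝ) :
    domB s ‖latQ h x‖ ≤ (4 * (2 / 3 : ℝ) ^ (-s)) * domB s ‖x‖ := by
  by_cases hx : latQ h x = 0
  · rw [hx]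
    have : domB s ‖(0 : Fin d → ℝ)‖ = 0 := by simp [domB]
    rw [this]
    exact mul_nonneg (by positivity) (domB_nonneg s (norm_nonneg x))
  have h1 := latQ_norm hh x hx
  have h2 := latQ_dist hh x
  have h3 : ‖latQ h x‖ ≤ ‖x‖ + ‖x - latQ h x‖ := by
    have := norm_sub_le x (x - latQ h x)
    simpa using this
  have h4 : ‖x‖ ≤ ‖latQ h x‖ + ‖x - latQ h x‖ := by
    have := norm_add_le (latQ h x) (x - latQ h x)
    simpa using this
  set q := ‖latQ h x‖
  set r := ‖x‖
  have hr : 0 < r := by linarith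
  have a1 : q ≤ 2 * r := by linarith
  have a2 : 2 / 3 * r ≤ q := by linarith
  have hq : 0 < q := by linarith
  have b1 : min (q ^ 2) 1 ≤ 4 * min (r ^ 2) 1 := by
    rcases min_choice (r ^ 2) 1 with h | h <;> rw [h]
    · refine (min_le_left _ _).trans ?_
      nlinarith
    · refine (min_le_right _ _).trans ?_
      norm_num
  have b2 : q ^ (-s) ≤ (2 / 3 : ℝ) ^ (-s) * r ^ (-s) := by
    rw [← Real.mul_rpow (by norm_num) hr.le]
    exact Real.rpow_le_rpow_of_nonpos (by positivity) a2 (by linarith)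
  unfold domB
  calc min (q ^ 2) 1 * q ^ (-s) ≤ (4 * min (r ^ 2) 1) * ((2 / 3 : ℝ) ^ (-s) * r ^ (-s)) :=
        mul_le_mul b1 b2 (by positivity) (by positivity)
    _ = _ := by ring

lemma latQ_tendsto {d : ℕ} (x : Fin d → ℝ) :
    Filter.Tendsto (fun h : ℝ => latQ h x) (nhdsWithin 0 (Set.Ioi 0)) (nhds x) := by
  rw [tendsto_iff_norm_sub_tendsto_zero]
  have h0 : Filter.Tendsto (fun h : ℝ => h / 2) (nhdsWithin 0 (Set.Ioi 0)) (nhds 0) := by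
    have : Filter.Tendsto (fun h : ℝ => h / 2) (nhds 0) (nhds (0 / 2)) :=
      Filter.Tendsto.div_const Filter.tendsto_id 2
    rw [zero_div] at this
    exact this.mono_left nhdsWithin_le_nhds
  refine squeeze_zero' (Filter.Eventually.of_forall fun h => norm_nonneg _) ?_ h0
  filter_upwards [self_mem_nhdsWithin] with h hh
  rw [norm_sub_rev]
  exact latQ_dist hh x

lemma latQ_measurable {d : ℕ} (h : ℝ) : Measurable (latQ (d := d) h) := by
  refine measurable_pi_lambda _ fun i => ?_
  unfold latQ
  refine Measurable.const_mul ?_ h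
  have h1 : Measurable (fun x : Fin d → ℝ => latRound (h⁻¹ • x) i) :=
    (measurable_pi_apply i).comp (latRound_measurable.comp (measurable_const_smul h⁻¹))
  exact (measurable_of_countable (fun n : ℤ => (n : ℝ))).comp h1

/-- For `d ≥ 1`, `0 < α < 2`, `ξ ∈ ℝ^d`:
(i) `z ↦ (1 − cos(ξ·z))/‖z‖^(d+α)` is Lebesgue integrable on `ℝ^d`;
(ii) for every `h > 0` the lattice sum
`T h z = (1 − cos(h ξ·z))/‖hz‖^(d+α)` over `z ∈ ℤ^d` is summable (the `z = 0` term
being `0` by the junk convention `0/0 = 0`, so this is summability over `z ≠ 0`);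
(iii) `h^d · ∑' z, T h z → ∫ (1 − cos(ξ·z))/‖z‖^(d+α) dz` as `h → 0+`. -/
theorem stmt14 (d : ℕ) (hd : 1 ≤ d) (α : ℝ) (hα1 : 0 < α) (hα2 : α < 2)
    (ξ : Fin d → ℝ)
    (g : (Fin d → ℝ) → ℝ)
    (hg : ∀ z, g z = (1 - Real.cos (∑ i, ξ i * z i))
        / Real.sqrt (∑ i, z i ^ 2) ^ ((d : ℝ) + α))
    (T : ℝ → (Fin d → ℤ) → ℝ)
    (hT : ∀ h z, T h z = (1 - Real.cos (∑ i, h * ξ i * (z i : ℝ)))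
        / Real.sqrt (∑ i, (h * (z i : ℝ)) ^ 2) ^ ((d : ℝ) + α)) :
    Integrable g ∧
    (∀ h : ℝ, 0 < h → Summable (T h)) ∧
    Filter.Tendsto (fun h : ℝ => h ^ d * ∑' z, T h z)
      (nhdsWithin 0 (Set.Ioi 0)) (nhds (∫ z, g z)) := by
  have hs : 0 < (d : ℝ) + α := by positivity
  have hg0 : ∀ z, 0 ≤ g z := fun z => by
    rw [hg]
    exact div_nonneg (by linarith [Real.cos_le_one (∑ i, ξ i * z i)])
      (Real.rpow_nonneg (Real.sqrt_nonneg _) _)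
  have hgm : Measurable g := by
    rw [funext hg]; fun_prop
  set K : ℝ := 2 + (∑ i, |ξ i|) ^ 2 with hK
  have hK0 : 0 ≤ K := by positivity
  have hgb : ∀ z, g z ≤ K * domB ((d : ℝ) + α) ‖z‖ := fun z => by
    rw [hg]; exact symbol_bound _ hs ξ z
  have hB := domB_integrable d hd α hα1 hα2
  set B : (Fin d → ℝ) → ℝ := fun x =>
    K * ((4 * (2 / 3 : ℝ) ^ (-((d : ℝ) + α))) * domB ((d : ℝ) + α) ‖x‖) with hBdef
  have hBi : Integrable B := (hB.const_mul _).const_mul _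
  have hQb : ∀ h : ℝ, 0 < h → ∀ x, ‖g (latQ h x)‖ ≤ B x := fun h hh x => by
    rw [Real.norm_of_nonneg (hg0 _)]
    exact (hgb _).trans (mul_le_mul_of_nonneg_left (latQ_domB hh hs x) hK0)
  have hQm : ∀ h : ℝ, Measurable (fun x => g (latQ h x)) := fun h => hgm.comp (latQ_measurable h)
  have hQi : ∀ h : ℝ, 0 < h → Integrable (fun x => g (latQ h x)) := fun h hh =>
    hBi.mono' (hQm h).aestronglyMeasurable (Filter.Eventually.of_forall (hQb h hh))
  have hTg : ∀ h : ℝ, 0 < h → ∀ x, g (latQ h x) = T h (latRound (h⁻¹ • x)) := by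
    intro h hh x
    rw [hg, hT]
    simp only [latQ]
    congr 3
    exact Finset.sum_congr rfl fun i _ => by ring
  have hTi : ∀ h : ℝ, 0 < h → Integrable (fun y : Fin d → ℝ => T h (latRound y)) := by
    intro h hh
    have h1 := hQi h hh
    simp only [hTg h hh] at h1
    exact (integrable_comp_smul_iff volume (fun y : Fin d → ℝ => T h (latRound y))
      (inv_ne_zero hh.ne')).1 h1
  refine ⟨?_, fun h hh => (latRound_sum _ (hTi h hh)).1, ?_⟩
  · refine (hB.const_mul K).mono' hgm.aestronglyMeasurable (Filter.Eventually.of_forall fun z => ?_)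
    rw [Real.norm_of_nonneg (hg0 _)]
    exact hgb z
  have hlim : Filter.Tendsto (fun h : ℝ => ∫ x, g (latQ h x))
      (nhdsWithin 0 (Set.Ioi 0)) (nhds (∫ z, g z)) := by
    refine tendsto_integral_filter_of_dominated_convergence B
      (Filter.Eventually.of_forall fun h => (hQm h).aestronglyMeasurable) ?_ hBi ?_
    · filter_upwards [self_mem_nhdsWithin] with h hh
      exact Filter.Eventually.of_forall (hQb h hh)
    · have : Nonempty (Fin d) := ⟨⟨0, hd⟩⟩
      have hne : ∀ᵐ x : Fin d → ℝ, x ≠ 0 := by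
        rw [ae_iff]; simp
      filter_upwards [hne] with x hx
      have hpos : 0 < Real.sqrt (∑ i, x i ^ 2) :=
        lt_of_lt_of_le (norm_pos_iff.2 hx) (norm_le_sqrt_sum x)
      have hc : ContinuousAt g x := by
        rw [funext hg]
        refine ContinuousAt.div (Continuous.continuousAt (by fun_prop)) ?_ (Real.rpow_pos_of_pos hpos _).ne'
        exact ContinuousAt.rpow_const (Continuous.continuousAt (by fun_prop)) (Or.inl hpos.ne')
      exact hc.tendsto.comp (latQ_tendsto x)
  refine hlim.congr' ?_
  filter_upwards [self_mem_nhdsWithin] with h hh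
  have hh' : (0 : ℝ) < h := hh
  simp only [hTg h hh']
  rw [Measure.integral_comp_smul volume (fun y : Fin d → ℝ => T h (latRound y)) h⁻¹,
    (latRound_sum _ (hTi h hh')).2]
  simp only [Module.finrank_fin_fun, smul_eq_mul]
  rw [inv_pow, inv_inv, abs_of_pos (pow_pos hh' d)]
end

section
/- Let 1 < α < 2. Define D(a,α) = (α·a² − 4a + 2 − α)² − 4a²·α·(2−α), and for a ∈ [(2−α)/α, 1] define B(a,α) = (4a − α·a² − (2−α) − √(D(a,α)))/(2aα). Then for every a ∈ [(2−α)/α, 1]: (i) D(a,α) ≥ 0, so B(a,α) is well defined; (ii) h(a, B(a,α), α) = 0; (iii) B((2−α)/α, α) = B(1, α) = (2−α)/α; and (iv) with a_m = ((2−α)/α)^{1/2} ∈ [(2−α)/α, 1], one has B(a_m, α) ≥ 1 − (1+√2)(α−1). -/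
open Real

/-- For `1 < α < 2`, with `D(a,α) = (αa² − 4a + 2 − α)² − 4a²α(2−α)` and
`B(a,α) = (4a − αa² − (2−α) − √D(a,α))/(2aα)` on `[(2−α)/α, 1]`:
(i) `D(a,α) ≥ 0` there; (ii) `h(a, B(a,α), α) = 0` there; (iii) the boundary values are
`B((2−α)/α,α) = B(1,α) = (2−α)/α`; (iv) with `a_m = √((2−α)/α) ∈ [(2−α)/α, 1]`, one has
`B(a_m,α) ≥ 1 − (1+√2)(α−1)`. -/
theorem stmt17 (α : ℝ) (hα1 : 1 < α) (hα2 : α < 2)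
    (h : ℝ → ℝ → ℝ)
    (hh : ∀ a b, h a b = α * a * b * (a + b) - 4 * (a * b) + (2 - α) * (a + b))
    (D : ℝ → ℝ)
    (hD : ∀ a, D a = (α * a ^ 2 - 4 * a + 2 - α) ^ 2 - 4 * a ^ 2 * α * (2 - α))
    (B : ℝ → ℝ)
    (hB : ∀ a, B a = (4 * a - α * a ^ 2 - (2 - α) - Real.sqrt (D a)) / (2 * a * α)) :
    (∀ a ∈ Set.Icc ((2 - α) / α) 1, 0 ≤ D a) ∧
    (∀ a ∈ Set.Icc ((2 - α) / α) 1, h a (B a) = 0) ∧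
    B ((2 - α) / α) = (2 - α) / α ∧
    B 1 = (2 - α) / α ∧
    Real.sqrt ((2 - α) / α) ∈ Set.Icc ((2 - α) / α) 1 ∧
    1 - (1 + Real.sqrt 2) * (α - 1) ≤ B (Real.sqrt ((2 - α) / α)) := by
  have hα : 0 < α := by linarith
  have hc0 : 0 < (2 - α) / α := div_pos (by linarith) hα
  have hc1 : (2 - α) / α < 1 := by rw [div_lt_one hα]; linarith
  obtain ⟨c, hc⟩ : ∃ c, c = (2 - α) / α := ⟨_, rfl⟩
  rw [← hc] at hc0 hc1 ⊢
  have hcα : α * c = 2 - α := by rw [hc]; field_simp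
  have hDn : ∀ a ∈ Set.Icc c 1, 0 ≤ D a := by
    rintro a ⟨h1, h2⟩
    have ha : 0 < a := by linarith
    have hP : 2 * a ≤ 4 * a - α * a ^ 2 - (2 - α) := by
      have h3 : 0 ≤ α * ((a - c) * (1 - a)) :=
        mul_nonneg hα.le (mul_nonneg (by linarith) (by linarith))
      have h4 : α * ((a - c) * (1 - a)) = α * a - α * a ^ 2 - α * c + α * c * a := by ring
      rw [h4, hcα] at h3
      linarith
    have h5 : (2 * a) ^ 2 ≤ (4 * a - α * a ^ 2 - (2 - α)) ^ 2 :=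
      pow_le_pow_left₀ (by linarith) hP 2
    rw [hD]
    have h6 : 0 ≤ (a * (α - 1)) ^ 2 := sq_nonneg _
    nlinarith
  have hsD1 : Real.sqrt (D c) = 2 * c * (α - 1) := by
    have : D c = (2 * c * (α - 1)) ^ 2 := by
      rw [hD]
      have : α * c ^ 2 - 4 * c + 2 - α = -2 * c := by
        linear_combination (c - 1) * hcα
      rw [this]; ring
    rw [this, Real.sqrt_sq (by have : 0 < α - 1 := by linarith
                               positivity)]
  have hsD2 : Real.sqrt (D 1) = 2 * (α - 1) := by
    have : D 1 = (2 * (α - 1)) ^ 2 := by rw [hD]; ring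
    rw [this, Real.sqrt_sq (by linarith)]
  have hs2 : Real.sqrt c ^ 2 = c := Real.sq_sqrt hc0.le
  have hs0 : 0 < Real.sqrt c := Real.sqrt_pos.2 hc0
  obtain ⟨s, hs⟩ : ∃ s, s = Real.sqrt c := ⟨_, rfl⟩
  rw [← hs] at hs2 hs0 ⊢
  have hs1 : s ≤ 1 := by nlinarith
  refine ⟨hDn, ?_, ?_, ?_, ⟨by nlinarith, hs1⟩, ?_⟩
  · intro a ha
    have ha0 : 0 < a := lt_of_lt_of_le hc0 ha.1
    have hq := Real.sq_sqrt (hDn a ha)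
    have hBa := hB a
    obtain ⟨q, hqq⟩ : ∃ q, q = Real.sqrt (D a) := ⟨_, rfl⟩
    rw [← hqq] at hq hBa
    rw [hD] at hq
    rw [hh]
    have hne : 2 * a * α ≠ 0 := by positivity
    rw [eq_div_iff hne] at hBa
    have hne2 : 4 * (a * α) ≠ 0 := by positivity
    apply mul_left_cancel₀ hne2
    have hq' : q = 4 * a - α * a ^ 2 - (2 - α) - B a * (2 * a * α) := by linarith
    rw [hq'] at hq
    linear_combination hq
  · rw [hB, hsD1, div_eq_iff (by positivity)]
    linear_combination (-3 * c + 1) * hcα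
  · rw [hB, hsD2, div_eq_iff (by positivity)]
    linear_combination -2 * hcα
  · have hr0 : 0 < α * s := by positivity
    have hr2 : (α * s) ^ 2 = 1 - (α - 1) ^ 2 := by
      rw [mul_pow, hs2]; linear_combination α * hcα
    have hr1 : α * s ≤ 1 := by nlinarith [sq_nonneg (α - 1)]
    have hu2 : Real.sqrt (1 - α * s) ^ 2 = 1 - α * s := Real.sq_sqrt (by linarith)
    have hu0 : 0 ≤ Real.sqrt (1 - α * s) := Real.sqrt_nonneg _
    obtain ⟨u, hu⟩ : ∃ u, u = Real.sqrt (1 - α * s) := ⟨_, rfl⟩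
    rw [← hu] at hu2 hu0
    have hsD : Real.sqrt (D s) = 4 * s * u := by
      have : D s = (4 * s * u) ^ 2 := by
        have e : 2 - α = α * s ^ 2 := by rw [hs2, hcα]
        have e2 : α * s ^ 2 - 4 * s + 2 - α = 2 * α * s ^ 2 - 4 * s := by linarith
        rw [hD, e2, e, mul_pow, hu2]; ring
      rw [this, Real.sqrt_sq (by positivity)]
    have hBs : B s = (1 - u) ^ 2 / α := by
      rw [hB, hsD, div_eq_div_iff (by positivity) (by positivity)]
      linear_combination α * hcα + α ^ 2 * hs2 - 2 * s * α * hu2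
    rw [hBs, le_div_iff₀ hα]
    have ht0 : 0 < α - 1 := by linarith
    have hw0 : 0 ≤ Real.sqrt 2 := Real.sqrt_nonneg _
    have hw2 : Real.sqrt 2 ^ 2 = 2 := Real.sq_sqrt (by norm_num)
    obtain ⟨w, hw⟩ : ∃ w, w = Real.sqrt 2 := ⟨_, rfl⟩
    rw [← hw] at hw0 hw2 ⊢
    obtain ⟨t, ht⟩ : ∃ t, t = α - 1 := ⟨_, rfl⟩
    have hαt : α = 1 + t := by linarith
    rw [← ht] at ht0 hr2 ⊢
    have hu1 : u ≤ 1 := by nlinarith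
    have ht2 : t ^ 2 = u ^ 2 * (2 - u ^ 2) := by rw [hu2]; linarith
    have hw1 : 1 ≤ w := by nlinarith
    have huu : u ^ 2 ≤ 1 := by nlinarith
    have k1 : u * (2 - u ^ 2) ≤ w * t := by
      refine (abs_le_of_sq_le_sq' ?_ (by positivity)).2
      rw [mul_pow, mul_pow, hw2, ht2]
      have : 0 ≤ u ^ 2 * (2 - u ^ 2) * u ^ 2 :=
        mul_nonneg (mul_nonneg (by positivity) (by linarith)) (by positivity)
      nlinarith
    have k2 : u ^ 2 ≤ t ^ 2 := by rw [ht2]; nlinarith [sq_nonneg u]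
    have k3 : 0 ≤ (w - 1) * t ^ 2 := mul_nonneg (by linarith) (sq_nonneg _)
    have k4 : u ^ 3 ≤ u ^ 2 := by nlinarith [sq_nonneg u]
    rw [hαt]
    have k5 : 0 ≤ u ^ 2 := sq_nonneg u
    have e1 : (1 - (1 + w) * t) * (1 + t) = 1 - w * t - 2 * t ^ 2 - (w - 1) * t ^ 2 := by ring
    have e2 : (1 - u) ^ 2 = 1 - u * (2 - u ^ 2) + u ^ 2 - u ^ 3 := by ring
    rw [e1, e2]
    linarith
end
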